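/- Let c₁, c₂ be real constants. Suppose x, y : ℝ → ℝ are twice differentiable with x(t) > 0 for all t, and satisfy the Newtonian equations of motion for the potential V(x,y) = c₁·√x + c₂·y. Then the time-dependent cubic function J(t) = t·(c₂·x'³ + 3c₁c₂·√x·x' − (3/2)c₁²·y') − c₂·x·x'² + (3c₁²/2)·y − (8c₁c₂/3)·x^{3/2} is constant in t. -/

import Mathlib

/-!
Write `J = t * K - G` with `K = c₂ * (x' ^ 3 + 3 * U * x') - (3 / 2) * c₁ ^ 2 * y'`,
where `U = c₁ * √x`. For any potential `U` on the line, `x' ^ 3 + 3 * U * x'` changes at the rate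
`-3 * U * U' = -(3 / 2) * (U ^ 2)'`, and here `U ^ 2 = c₁ ^ 2 * x`, so this rate is constant, just
like `y'' = -c₂`. The coefficients in `K` balance the two rates, so `K` is itself a first integral.
Since `U` is homogeneous of degree `1 / 2`, Euler's relation `x * U' = U / 2` makes
`x * x' ^ 2 + (8 / 3) * x * U` a primitive of `x' ^ 3 + 3 * U * x'`; hence `G' = K` and
`J' = K + t * K' - G' = 0`.
-/

theorem hasDerivAt_id_smul_sub_primitive {𝕜 E : Type*} [NontriviallyNormedField 𝕜]
    [NormedAddCommGroup E] [NormedSpace 𝕜 E] {K G : 𝕜 → E} {K' : E} {t : 𝕜} (hK : HasDerivAt K K' t)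
    (hG : HasDerivAt G (K t) t) : HasDerivAt (fun s => s • K s - G s) (t • K') t := by
  simpa using ((hasDerivAt_id' t).fun_smul hK).fun_sub hG

theorem rpow_three_halves_eq_mul_sqrt {a : ℝ} (ha : 0 ≤ a) : a ^ (3 / 2 : ℝ) = a * √a := by
  rw [Real.rpow_div_two_eq_sqrt 3 ha, Real.rpow_ofNat, pow_succ, Real.sq_sqrt ha]

theorem hasDerivAt_const_mul_sqrt (c : ℝ) {a : ℝ} (ha : a ≠ 0) :
    HasDerivAt (fun a => c * √a) (c / (2 * √a)) a := by
  simpa only [mul_one_div] using (Real.hasDerivAt_sqrt ha).const_mul c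

section LineMotion

variable {𝕜 : Type*} [NontriviallyNormedField 𝕜] {U x v : 𝕜 → 𝕜} {U' t : 𝕜}

theorem hasDerivAt_velocity_cube_add_potential_mul_velocity (hx : HasDerivAt x (v t) t)
    (hv : HasDerivAt v (-U') t) (hU : HasDerivAt U U' (x t)) :
    HasDerivAt (fun s => v s ^ 3 + 3 * (U (x s) * v s)) (-3 * (U (x t) * U')) t := by
  have hUx : HasDerivAt (fun s => U (x s)) (U' * v t) t := hU.comp t hx
  refine ((hv.fun_pow 3).fun_add ((hUx.fun_mul hv).const_mul 3)).congr_deriv ?_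
  push_cast
  ring

theorem hasDerivAt_virial_of_homogeneous {r : 𝕜} (b : 𝕜) (hx : HasDerivAt x (v t) t)
    (hv : HasDerivAt v (-U') t) (hU : HasDerivAt U U' (x t)) (hEuler : x t * U' = r * U (x t)) :
    HasDerivAt (fun s => x s * v s ^ 2 + b * (x s * U (x s)))
      (v t ^ 3 + (b * (1 + r) - 2 * r) * (U (x t) * v t)) t := by
  have hUx : HasDerivAt (fun s => U (x s)) (U' * v t) t := hU.comp t hx
  refine ((hx.fun_mul (hv.fun_pow 2)).fun_add ((hx.fun_mul hUx).const_mul b)).congr_deriv ?_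
  push_cast
  linear_combination (b - 2) * v t * hEuler

end LineMotion

section SqrtLinearPotential

variable {c₁ c₂ t : ℝ} {x y x' y' : ℝ → ℝ}

/-- The coefficient `K` of `t` in the time-dependent first integral `J = t * K - G`, evaluated along
a trajectory; it is an autonomous cubic first integral. -/
noncomputable def cubicIntegral (c₁ c₂ : ℝ) (x x' y' : ℝ → ℝ) (t : ℝ) : ℝ :=
  c₂ * (x' t ^ 3 + 3 * (c₁ * √(x t) * x' t)) - 3 / 2 * c₁ ^ 2 * y' t

/-- The quantity `G` in `J = t * K - G`, evaluated along a trajectory; its time derivative is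
`cubicIntegral`. The power `x ^ (3 / 2)` is encoded as `x * √x`. -/
noncomputable def cubicIntegralPrimitive (c₁ c₂ : ℝ) (x y x' : ℝ → ℝ) (t : ℝ) : ℝ :=
  c₂ * (x t * x' t ^ 2 + 8 / 3 * (x t * (c₁ * √(x t)))) - 3 / 2 * c₁ ^ 2 * y t

theorem hasDerivAt_cubicIntegral (hxpos : 0 < x t) (hx : HasDerivAt x (x' t) t)
    (hx' : HasDerivAt x' (-(c₁ / (2 * √(x t)))) t) (hy' : HasDerivAt y' (-c₂) t) :
    HasDerivAt (cubicIntegral c₁ c₂ x x' y') 0 t := by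
  have hforce : c₁ * √(x t) * (c₁ / (2 * √(x t))) = c₁ ^ 2 / 2 := by
    have := Real.sqrt_ne_zero'.mpr hxpos
    field_simp
  have hline := hasDerivAt_velocity_cube_add_potential_mul_velocity hx hx'
    (hasDerivAt_const_mul_sqrt c₁ hxpos.ne')
  refine ((hline.const_mul c₂).fun_sub (hy'.const_mul (3 / 2 * c₁ ^ 2))).congr_deriv ?_
  rw [hforce]
  ring

theorem hasDerivAt_cubicIntegralPrimitive (hxpos : 0 < x t) (hx : HasDerivAt x (x' t) t)
    (hx' : HasDerivAt x' (-(c₁ / (2 * √(x t)))) t) (hy : HasDerivAt y (y' t) t) :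
    HasDerivAt (cubicIntegralPrimitive c₁ c₂ x y x') (cubicIntegral c₁ c₂ x x' y' t) t := by
  have hEuler : x t * (c₁ / (2 * √(x t))) = 1 / 2 * (c₁ * √(x t)) := by
    linear_combination c₁ / 2 * Real.div_sqrt (x := x t)
  have hline := hasDerivAt_virial_of_homogeneous (8 / 3) hx hx'
    (hasDerivAt_const_mul_sqrt c₁ hxpos.ne') hEuler
  refine ((hline.const_mul c₂).fun_sub (hy.const_mul (3 / 2 * c₁ ^ 2))).congr_deriv ?_
  rw [cubicIntegral]
  ring

end SqrtLinearPotential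

theorem stmt_16 (c₁ c₂ : ℝ) (x y x' y' x'' y'' : ℝ → ℝ) (V : ℝ → ℝ → ℝ) (J : ℝ → ℝ)
    (hV : ∀ a b : ℝ, V a b = c₁ * Real.sqrt a + c₂ * b)
    (hx : ∀ t, HasDerivAt x (x' t) t)
    (hy : ∀ t, HasDerivAt y (y' t) t)
    (hx' : ∀ t, HasDerivAt x' (x'' t) t)
    (hy' : ∀ t, HasDerivAt y' (y'' t) t)
    (hxpos : ∀ t, 0 < x t)
    (heqx : ∀ t, x'' t = - deriv (fun a => V a (y t)) (x t))
    (heqy : ∀ t, y'' t = - deriv (fun b => V (x t) b) (y t))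
    (hJ : ∀ t, J t =
      t * (c₂ * x' t ^ 3 + 3 * c₁ * c₂ * Real.sqrt (x t) * x' t -
        (3 / 2) * c₁ ^ 2 * y' t) -
      c₂ * x t * x' t ^ 2 + (3 * c₁ ^ 2 / 2) * y t -
      (8 * c₁ * c₂ / 3) * x t ^ ((3 : ℝ) / 2)) :
    ∀ t₁ t₂ : ℝ, J t₁ = J t₂ := by
  have hxForce (t : ℝ) : HasDerivAt x' (-(c₁ / (2 * √(x t)))) t := by
    simpa only [heqx, hV, deriv_add_const,
      (hasDerivAt_const_mul_sqrt c₁ (hxpos t).ne').deriv] using hx' t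
  have hyForce (t : ℝ) : HasDerivAt y' (-c₂) t := by
    simpa only [heqy, hV, deriv_const_add, (hasDerivAt_const_mul c₂).deriv] using hy' t
  have hJ_eq : J = fun t =>
      t • cubicIntegral c₁ c₂ x x' y' t - cubicIntegralPrimitive c₁ c₂ x y x' t := by
    funext t
    rw [hJ, rpow_three_halves_eq_mul_sqrt (hxpos t).le, cubicIntegral,
      cubicIntegralPrimitive, smul_eq_mul]
    ring
  have hJ_deriv (t : ℝ) : HasDerivAt J 0 t := by
    rw [hJ_eq, ← smul_zero t]
    exact hasDerivAt_id_smul_sub_primitive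
      (hasDerivAt_cubicIntegral (hxpos t) (hx t) (hxForce t) (hyForce t))
      (hasDerivAt_cubicIntegralPrimitive (hxpos t) (hx t) (hxForce t) (hy t))
  exact is_const_of_deriv_eq_zero (fun t => (hJ_deriv t).differentiableAt)
    (fun t => (hJ_deriv t).deriv)
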